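/- There exists a constant C > 0, depending only on n, κ1 and C₀, such that for every x = (x', x_n) ∈ Ω₁: (i) for each tangential index α ∈ {1,…,n−1}, |∂_α ũ(x)| ≤ C·|x'|/(ε + |x'|²)·|φ(x') − ψ(x')| + C·(‖∇φ‖_∞ + ‖∇ψ‖_∞); (ii) ∂_n ũ(x) = (φ(x') − ψ(x'))/δ(x'), and consequently |φ(x') − ψ(x')|/(C·(ε + |x'|²)) ≤ |∂_n ũ(x)| ≤ C·|φ(x') − ψ(x')|/(ε + |x'|²). -/

import Mathlib

open MeasureTheory Metric Finset

noncomputable section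

/-- `ℝ^{n-1}`, the horizontal (tangential) variables `x'`. -/
abbrev Ep (n : ℕ) := EuclideanSpace ℝ (Fin (n - 1))

/-- `ℝ^n = ℝ^{n-1} × ℝ`, points written `x = (x', x_n)`. -/
abbrev Efull (n : ℕ) := Ep n × ℝ

/-- The narrow region `Ω_r`. -/
def Omega (n : ℕ) (ε : ℝ) (h1 h2 : Ep n → ℝ) (r : ℝ) : Set (Efull n) :=
  {x | ‖x.1‖ < r ∧ -ε/2 + h2 x.1 < x.2 ∧ x.2 < ε/2 + h1 x.1}

/-- Top boundary `Γ_r⁺`. -/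
def Gammap (n : ℕ) (ε : ℝ) (h1 : Ep n → ℝ) (r : ℝ) : Set (Efull n) :=
  {x | ‖x.1‖ ≤ r ∧ x.2 = ε/2 + h1 x.1}

/-- Bottom boundary `Γ_r⁻`. -/
def Gammam (n : ℕ) (ε : ℝ) (h2 : Ep n → ℝ) (r : ℝ) : Set (Efull n) :=
  {x | ‖x.1‖ ≤ r ∧ x.2 = -ε/2 + h2 x.1}

/-- `Ω̂_s(x₀) = {x ∈ Ω_{1/2} : |x' - x₀'| < s}`. -/
def OmegaHat (n : ℕ) (ε : ℝ) (h1 h2 : Ep n → ℝ) (x0 : Efull n) (s : ℝ) : Set (Efull n) :=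
  {x | x ∈ Omega n ε h1 h2 (1/2) ∧ ‖x.1 - x0.1‖ < s}

/-- The `n` coordinate directions of `ℝ^{n-1} × ℝ`: the first `n-1` are the horizontal
Euclidean basis vectors, the last is the vertical direction. -/
def dir (n : ℕ) (α : Fin n) : Efull n :=
  if h : (α : ℕ) < n - 1 then (EuclideanSpace.single (⟨(α : ℕ), h⟩ : Fin (n - 1)) 1, (0:ℝ))
  else (0, 1)

/-- Tangential direction `e_α` for `α ∈ {1, …, n-1}`. -/
def tang (n : ℕ) (α : Fin (n - 1)) : Efull n := (EuclideanSpace.single α 1, (0:ℝ))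

/-- Vertical direction `e_n`. -/
def vert (n : ℕ) : Efull n := (0, 1)

/-- Pointwise Laplacian `Δu = Σ_α ∂_α∂_α u`. -/
def lapl (n : ℕ) (u : Efull n → ℝ) (x : Efull n) : ℝ :=
  ∑ α : Fin n, fderiv ℝ (fun y => fderiv ℝ u y (dir n α)) x (dir n α)

/-- The auxiliary function `ū(x', x_n) = (x_n - h2(x') + ε/2)/(ε + h1(x') - h2(x'))`. -/
def ubar (n : ℕ) (ε : ℝ) (h1 h2 : Ep n → ℝ) (x : Efull n) : ℝ :=
  (x.2 - h2 x.1 + ε/2) / (ε + h1 x.1 - h2 x.1)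

/-- The auxiliary function `ũ = φ(x')·ū + ψ(x')·(1 - ū)`. -/
def util (n : ℕ) (ε : ℝ) (h1 h2 φ ψ : Ep n → ℝ) (x : Efull n) : ℝ :=
  φ x.1 * ubar n ε h1 h2 x + ψ x.1 * (1 - ubar n ε h1 h2 x)

/-- `C²`-norm on the closed unit ball: `sup_{|x'| ≤ 1} (|f| + |∇f| + |∇²f|)`. -/
def C2norm {F : Type*} [NormedAddCommGroup F] [NormedSpace ℝ F] (n : ℕ)
    (f : Ep n → F) : ℝ :=
  ⨆ y : closedBall (0 : Ep n) 1,
    (‖f (y : Ep n)‖ + ‖fderiv ℝ f (y : Ep n)‖ + ‖fderiv ℝ (fderiv ℝ f) (y : Ep n)‖)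

/-- `C²(S)`-norm of a function on `ℝ^n`. -/
def C2normOn (n : ℕ) (S : Set (Efull n)) (f : Efull n → ℝ) : ℝ :=
  ⨆ y : S,
    (‖f (y : Efull n)‖ + ‖fderiv ℝ f (y : Efull n)‖ + ‖fderiv ℝ (fderiv ℝ f) (y : Efull n)‖)

/-- `‖∇f‖_∞ = sup_{|x'| ≤ 1} |∇f(x')|`. -/
def gradSup {F : Type*} [NormedAddCommGroup F] [NormedSpace ℝ F] (n : ℕ) (f : Ep n → F) : ℝ :=
  ⨆ y : closedBall (0 : Ep n) 1, ‖fderiv ℝ f (y : Ep n)‖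

/-- `‖∇²f‖_∞ = sup_{|x'| ≤ 1} |∇²f(x')|`. -/
def hessSup {F : Type*} [NormedAddCommGroup F] [NormedSpace ℝ F] (n : ℕ) (f : Ep n → F) : ℝ :=
  ⨆ y : closedBall (0 : Ep n) 1, ‖fderiv ℝ (fderiv ℝ f) (y : Ep n)‖

/-- The geometric hypotheses on `h1, h2`: `C²` on the closed unit ball, the two graphs
do not touch, flatness at the origin, strict convexity of the gap, and `C²`-bound `κ1`. -/
def HGeom (n : ℕ) (ε κ0 κ1 : ℝ) (h1 h2 : Ep n → ℝ) : Prop :=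
  ContDiffOn ℝ 2 h1 (closedBall 0 1) ∧ ContDiffOn ℝ 2 h2 (closedBall 0 1) ∧
  (∀ y : Ep n, ‖y‖ ≤ 1 → -ε/2 + h2 y < ε/2 + h1 y) ∧
  h1 0 = 0 ∧ h2 0 = 0 ∧ fderiv ℝ h1 0 = 0 ∧ fderiv ℝ h2 0 = 0 ∧
  (∀ v : Ep n, κ0 * ‖v‖^2 ≤ fderiv ℝ (fderiv ℝ (fun y => h1 y - h2 y)) 0 v v) ∧
  C2norm n h1 + C2norm n h2 ≤ κ1

/-- Comparability `(ε + |x'|²)/C₀ ≤ δ(x') ≤ C₀ (ε + |x'|²)`. -/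
def DeltaComp (n : ℕ) (ε C₀ : ℝ) (h1 h2 : Ep n → ℝ) : Prop :=
  ∀ y : Ep n, ‖y‖ ≤ 1 →
    (ε + ‖y‖^2) / C₀ ≤ ε + h1 y - h2 y ∧ ε + h1 y - h2 y ≤ C₀ * (ε + ‖y‖^2)

/-- Hypotheses on the coefficients: `C²`-regularity with total `C²(Ω₁)`-norm at most `κ2`,
boundedness `|A| ≤ Λ`, and the weak ellipticity (Legendre) condition with constant `λ`. -/
def CoeffHyp (n N : ℕ) (ε lam Lam κ2 : ℝ) (h1 h2 : Ep n → ℝ)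
    (A : Fin n → Fin n → Fin N → Fin N → Efull n → ℝ)
    (B : Fin n → Fin N → Fin N → Efull n → ℝ)
    (Cc : Fin n → Fin N → Fin N → Efull n → ℝ)
    (Dc : Fin N → Fin N → Efull n → ℝ) : Prop :=
  (∀ α β i j, ContDiffOn ℝ 2 (A α β i j) (Omega n ε h1 h2 1)) ∧
  (∀ α i j, ContDiffOn ℝ 2 (B α i j) (Omega n ε h1 h2 1)) ∧
  (∀ β i j, ContDiffOn ℝ 2 (Cc β i j) (Omega n ε h1 h2 1)) ∧
  (∀ i j, ContDiffOn ℝ 2 (Dc i j) (Omega n ε h1 h2 1)) ∧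
  ((∑ α : Fin n, ∑ β : Fin n, ∑ i : Fin N, ∑ j : Fin N,
      C2normOn n (Omega n ε h1 h2 1) (A α β i j)) +
   (∑ α : Fin n, ∑ i : Fin N, ∑ j : Fin N, C2normOn n (Omega n ε h1 h2 1) (B α i j)) +
   (∑ β : Fin n, ∑ i : Fin N, ∑ j : Fin N, C2normOn n (Omega n ε h1 h2 1) (Cc β i j)) +
   (∑ i : Fin N, ∑ j : Fin N, C2normOn n (Omega n ε h1 h2 1) (Dc i j)) ≤ κ2) ∧
  (∀ α β i j, ∀ x ∈ Omega n ε h1 h2 1, |A α β i j x| ≤ Lam) ∧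
  (∀ ξ : Efull n → EuclideanSpace ℝ (Fin N), ContDiff ℝ (⊤ : ℕ∞) ξ →
    HasCompactSupport ξ → tsupport ξ ⊆ Omega n ε h1 h2 1 →
    lam * ∫ x in Omega n ε h1 h2 1, ‖fderiv ℝ ξ x‖^2 ≤
      ∫ x in Omega n ε h1 h2 1,
        ∑ α : Fin n, ∑ β : Fin n, ∑ i : Fin N, ∑ j : Fin N,
          A α β i j x * fderiv ℝ ξ x (dir n α) i * fderiv ℝ ξ x (dir n β) j)

/-- `u` is a weak solution of
`∂_α(A^{αβ}_{ij} ∂_β u^j + B^α_{ij} u^j) + C^β_{ij} ∂_β u^j + D_{ij} u^j = 0` in `Ω₁`. -/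
def WeakSol (n N : ℕ) (ε : ℝ) (h1 h2 : Ep n → ℝ)
    (A : Fin n → Fin n → Fin N → Fin N → Efull n → ℝ)
    (B : Fin n → Fin N → Fin N → Efull n → ℝ)
    (Cc : Fin n → Fin N → Fin N → Efull n → ℝ)
    (Dc : Fin N → Fin N → Efull n → ℝ)
    (u : Efull n → EuclideanSpace ℝ (Fin N)) : Prop :=
  ContDiffOn ℝ 1 u (Omega n ε h1 h2 1) ∧
  IntegrableOn (fun x => ‖u x‖^2 + ‖fderiv ℝ u x‖^2) (Omega n ε h1 h2 1) ∧
  ∀ ζ : Efull n → EuclideanSpace ℝ (Fin N), ContDiff ℝ (⊤ : ℕ∞) ζ →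
    HasCompactSupport ζ → tsupport ζ ⊆ Omega n ε h1 h2 1 →
    (∫ x in Omega n ε h1 h2 1,
      ((∑ α : Fin n, ∑ i : Fin N,
          ((∑ β : Fin n, ∑ j : Fin N, A α β i j x * fderiv ℝ u x (dir n β) j) +
            ∑ j : Fin N, B α i j x * u x j) * fderiv ℝ ζ x (dir n α) i) -
        ∑ i : Fin N,
          ((∑ β : Fin n, ∑ j : Fin N, Cc β i j x * fderiv ℝ u x (dir n β) j) +
            ∑ j : Fin N, Dc i j x * u x j) * ζ x i)) = 0

/-- `u` attains the boundary values `(φ, ψ)` on `Γ₁⁺` and `Γ₁⁻`. -/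
def AttainsBV {F : Type*} [NormedAddCommGroup F] [NormedSpace ℝ F] (n : ℕ) (ε : ℝ)
    (h1 h2 : Ep n → ℝ) (u : Efull n → F) (φ ψ : Ep n → F) : Prop :=
  ContinuousOn u (Omega n ε h1 h2 1 ∪ Gammap n ε h1 1 ∪ Gammam n ε h2 1) ∧
  (∀ y : Ep n, ‖y‖ ≤ 1 → u (y, ε/2 + h1 y) = φ y ∧ u (y, -ε/2 + h2 y) = ψ y)

/-- `u` is a harmonic function on `Ω₁` with boundary values `φ` on `Γ₁⁺` and `ψ` on `Γ₁⁻`. -/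
def HarmBV (n : ℕ) (ε : ℝ) (h1 h2 : Ep n → ℝ) (u : Efull n → ℝ) (φ ψ : Ep n → ℝ) : Prop :=
  ContDiffOn ℝ 2 u (Omega n ε h1 h2 1) ∧
  (∀ x ∈ Omega n ε h1 h2 1, lapl n u x = 0) ∧
  IntegrableOn (fun x => ‖u x‖^2 + ‖fderiv ℝ u x‖^2) (Omega n ε h1 h2 1) ∧
  AttainsBV n ε h1 h2 u φ ψ

/-!
On the fibre over `x'` the function `ū` is affine in `x_n` with values in `[0, 1]`, and writing
`s = ū(x)` the quotient rule takes the form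
`Dū(x) v = (v_n - (s ∇h1(x') + (1 - s) ∇h2(x'))·v') / δ(x')`.
Hence `Dũ(x) v = (s ∇φ + (1 - s) ∇ψ)·v' + (φ - ψ) Dū(x) v`, from which the vertical derivative is
read off. For horizontal `v` both convex combinations of gradients are controlled by the bounds on
their terms, and `∇h_i(0') = 0` together with the `C²`-bound gives `|∇h_i(x')| ≤ κ1 |x'|` by the
mean value inequality.

The norms are suprema of the two-sided derivative `fderiv` over the *closed* ball, which is the junk
value `0` at boundary points where `f` is not differentiable. They are nevertheless finite: where
the two-sided derivative exists it agrees with `fderivWithin`, which is continuous on the ball.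
-/

theorem div_le_mul_div_of_le_mul {K : Type*} [Field K] [LinearOrder K] [IsStrictOrderedRing K]
    {a b c C : K} (ha : 0 ≤ a) (hb : 0 < b) (hc : 0 < c) (hcb : c ≤ C * b) :
    a / b ≤ C * a / c := by
  rw [div_le_div_iff₀ hb hc]
  calc a * c ≤ a * (C * b) := by gcongr
    _ = C * a * b := by ring

theorem nonempty_interior_closedBall {X : Type*} [PseudoMetricSpace X] (x : X) {r : ℝ}
    (hr : 0 < r) : (interior (closedBall x r)).Nonempty :=
  ⟨x, ball_subset_interior_closedBall (mem_ball_self hr)⟩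

section DerivativesOnClosedSets

variable {𝕜 E F : Type*} [NontriviallyNormedField 𝕜] [NormedAddCommGroup E] [NormedSpace 𝕜 E]
  [NormedAddCommGroup F] [NormedSpace 𝕜 F] {f g : E → F} {s t : Set E} {x : E}

theorem norm_fderiv_le_norm_fderivWithin_of_eqOn (ht : UniqueDiffWithinAt 𝕜 t x) (hts : t ⊆ s)
    (hg : DifferentiableWithinAt 𝕜 g s x) (hfg : Set.EqOn f g t) :
    ‖fderiv 𝕜 f x‖ ≤ ‖fderivWithin 𝕜 g s x‖ := by
  by_cases hf : DifferentiableAt 𝕜 f x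
  · have hgt := hg.hasFDerivWithinAt.mono hts
    have := mem_closure_iff_nhdsWithin_neBot.1 ht.mem_closure
    have hval : f x = g x :=
      tendsto_nhds_unique_of_eventuallyEq hf.continuousAt.continuousWithinAt
        hgt.continuousWithinAt hfg.eventuallyEq_nhdsWithin
    rw [ht.eq hf.hasFDerivAt.hasFDerivWithinAt (hgt.congr hfg hval)]
  · simp [fderiv_zero_of_not_differentiableAt hf]

theorem bddAbove_norm_fderiv_image (hs : UniqueDiffOn 𝕜 s) (hcompact : IsCompact s)
    (hf : ContDiffOn 𝕜 1 f s) : BddAbove ((fun x => ‖fderiv 𝕜 f x‖) '' s) := by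
  obtain ⟨M, hM⟩ := hcompact.exists_bound_of_continuousOn
    (hf.continuousOn_fderivWithin hs le_rfl)
  refine ⟨M, Set.forall_mem_image.2 fun x hx => (hM x hx).trans' ?_⟩
  exact norm_fderiv_le_norm_fderivWithin_of_eqOn (hs x hx) subset_rfl
    (hf.differentiableOn one_ne_zero x hx) (Set.eqOn_refl f s)

end DerivativesOnClosedSets

section RealNormedSpace

variable {E F : Type*} [NormedAddCommGroup E] [NormedSpace ℝ E]
  [NormedAddCommGroup F] [NormedSpace ℝ F]

theorem bddAbove_norm_fderiv_fderiv_image {f : E → F} {s : Set E} (hs : Convex ℝ s)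
    (hint : (interior s).Nonempty) (hcompact : IsCompact s) (hf : ContDiffOn ℝ 2 f s) :
    BddAbove ((fun x => ‖fderiv ℝ (fderiv ℝ f) x‖) '' s) := by
  have hunique := uniqueDiffOn_convex hs hint
  have hf' : ContDiffOn ℝ 1 (fderivWithin ℝ f s) s :=
    hf.fderivWithin hunique one_add_one_eq_two.le
  obtain ⟨M, hM⟩ := hcompact.exists_bound_of_continuousOn
    (hf'.continuousOn_fderivWithin hunique le_rfl)
  refine ⟨M, Set.forall_mem_image.2 fun x hx => (hM x hx).trans' ?_⟩
  have hx_closure : x ∈ closure (interior s) :=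
    hs.closure_interior_eq_closure_of_nonempty_interior hint ▸ subset_closure hx
  exact norm_fderiv_le_norm_fderivWithin_of_eqOn
    (uniqueDiffWithinAt_convex hs.interior (by rwa [interior_interior]) hx_closure)
    interior_subset (hf'.differentiableOn one_ne_zero x hx)
    fun y hy => (fderivWithin_of_mem_nhds (mem_interior_iff_mem_nhds.1 hy)).symm

theorem uniqueDiffOn_closedBall (x : E) {r : ℝ} (hr : 0 < r) : UniqueDiffOn ℝ (closedBall x r) :=
  uniqueDiffOn_convex (convex_closedBall x r) (nonempty_interior_closedBall x hr)

theorem norm_convexCombo_le {a b : E} {r R : ℝ} (hr : r ∈ Set.Icc (0 : ℝ) 1)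
    (ha : ‖a‖ ≤ R) (hb : ‖b‖ ≤ R) : ‖r • a + (1 - r) • b‖ ≤ R := by
  simpa using convex_closedBall (0 : E) R (mem_closedBall_zero_iff.2 ha)
    (mem_closedBall_zero_iff.2 hb) hr.1 (sub_nonneg.2 hr.2) (add_sub_cancel r 1)

end RealNormedSpace

section UnitBall

variable {F : Type*} [NormedAddCommGroup F] [NormedSpace ℝ F] {n : ℕ} {f : Ep n → F} {y : Ep n}

theorem gradSup_nonneg (f : Ep n → F) : 0 ≤ gradSup n f :=
  Real.iSup_nonneg fun _ => norm_nonneg _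

theorem C2norm_nonneg (f : Ep n → F) : 0 ≤ C2norm n f :=
  Real.iSup_nonneg fun _ => by positivity

theorem norm_fderiv_le_gradSup (hf : ContDiffOn ℝ 1 f (closedBall 0 1)) (hy : ‖y‖ ≤ 1) :
    ‖fderiv ℝ f y‖ ≤ gradSup n f :=
  le_ciSup_set (f := fun y => ‖fderiv ℝ f y‖)
    (bddAbove_norm_fderiv_image (uniqueDiffOn_closedBall 0 one_pos) (isCompact_closedBall 0 1) hf)
    (mem_closedBall_zero_iff.2 hy)

theorem norm_fderiv_fderiv_le_C2norm (hf : ContDiffOn ℝ 2 f (closedBall 0 1)) (hy : ‖y‖ ≤ 1) :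
    ‖fderiv ℝ (fderiv ℝ f) y‖ ≤ C2norm n f := by
  have hcompact := isCompact_closedBall (0 : Ep n) 1
  obtain ⟨M₀, hM₀⟩ := hcompact.exists_bound_of_continuousOn hf.continuousOn
  obtain ⟨M₁, hM₁⟩ := bddAbove_norm_fderiv_image (uniqueDiffOn_closedBall 0 one_pos) hcompact
    (hf.of_le one_le_two)
  obtain ⟨M₂, hM₂⟩ := bddAbove_norm_fderiv_fderiv_image (convex_closedBall (0 : Ep n) 1)
    (nonempty_interior_closedBall 0 one_pos) hcompact hf
  have hbdd : BddAbove
      ((fun y => ‖f y‖ + ‖fderiv ℝ f y‖ + ‖fderiv ℝ (fderiv ℝ f) y‖) '' closedBall 0 1) :=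
    ⟨M₀ + M₁ + M₂, Set.forall_mem_image.2 fun z hz => add_le_add_three (hM₀ z hz)
      (hM₁ (Set.mem_image_of_mem _ hz)) (hM₂ (Set.mem_image_of_mem _ hz))⟩
  calc ‖fderiv ℝ (fderiv ℝ f) y‖
      ≤ ‖f y‖ + ‖fderiv ℝ f y‖ + ‖fderiv ℝ (fderiv ℝ f) y‖ :=
        le_add_of_nonneg_left (by positivity)
    _ ≤ C2norm n f := le_ciSup_set hbdd (mem_closedBall_zero_iff.2 hy)

theorem norm_fderiv_le_C2norm_mul_norm (hf : ContDiffOn ℝ 2 f (closedBall 0 1))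
    (hf_zero : fderiv ℝ f 0 = 0) (hy : ‖y‖ < 1) : ‖fderiv ℝ f y‖ ≤ C2norm n f * ‖y‖ := by
  have hdiff : DifferentiableOn ℝ (fderiv ℝ f) (ball 0 1) :=
    ((hf.mono ball_subset_closedBall).fderiv_of_isOpen isOpen_ball
      one_add_one_eq_two.le).differentiableOn one_ne_zero
  simpa [hf_zero] using (convex_ball (0 : Ep n) 1).norm_image_sub_le_of_norm_fderiv_le
    (fun z hz => hdiff.differentiableAt (isOpen_ball.mem_nhds hz))
    (fun z hz => norm_fderiv_fderiv_le_C2norm hf (mem_ball_zero_iff.1 hz).le)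
    (mem_ball_self one_pos) (mem_ball_zero_iff.2 hy)

theorem differentiableAt_of_contDiffOn_closedBall (hf : ContDiffOn ℝ 1 f (closedBall 0 1))
    (hy : ‖y‖ < 1) : DifferentiableAt ℝ f y :=
  (hf.differentiableOn one_ne_zero).differentiableAt
    (closedBall_mem_nhds_of_mem (mem_ball_zero_iff.2 hy))

end UnitBall

section Interpolation

variable {n : ℕ} {ε r : ℝ} {h1 h2 φ ψ : Ep n → ℝ} {x : Efull n}

theorem gap_pos_of_mem_Omega (hx : x ∈ Omega n ε h1 h2 r) : 0 < ε + h1 x.1 - h2 x.1 := by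
  linarith [hx.2.1, hx.2.2]

theorem ubar_mem_Icc (hx : x ∈ Omega n ε h1 h2 r) : ubar n ε h1 h2 x ∈ Set.Icc 0 1 := by
  have hgap := gap_pos_of_mem_Omega hx
  exact ⟨div_nonneg (by linarith [hx.2.1]) hgap.le, (div_le_one hgap).2 (by linarith [hx.2.2])⟩

theorem hasFDerivAt_ubar {h1' h2' : Ep n →L[ℝ] ℝ} (hh1 : HasFDerivAt h1 h1' x.1)
    (hh2 : HasFDerivAt h2 h2' x.1) (hgap : ε + h1 x.1 - h2 x.1 ≠ 0) :
    HasFDerivAt (ubar n ε h1 h2)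
      ((ε + h1 x.1 - h2 x.1)⁻¹ • (ContinuousLinearMap.snd ℝ (Ep n) ℝ -
        (ubar n ε h1 h2 x • h1' + (1 - ubar n ε h1 h2 x) • h2') ∘L
          ContinuousLinearMap.fst ℝ (Ep n) ℝ)) x := by
  have hh1_fst := hh1.comp x hasFDerivAt_fst
  have hh2_fst := hh2.comp x hasFDerivAt_fst
  have hquot := ((hasFDerivAt_snd.sub hh2_fst).add_const (ε / 2)).mul
    ((hasDerivAt_inv hgap).comp_hasFDerivAt x ((hh1_fst.const_add ε).sub hh2_fst))
  refine hquot.congr_fderiv (ContinuousLinearMap.ext fun v => ?_)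
  simp only [Pi.sub_apply, Function.comp_apply, neg_smul, smul_neg, add_apply, neg_apply,
    smul_apply, sub_apply, ContinuousLinearMap.comp_apply, ContinuousLinearMap.coe_fst',
    smul_eq_mul, ContinuousLinearMap.coe_snd', ubar]
  field_simp
  ring

theorem hasFDerivAt_util {φ' ψ' : Ep n →L[ℝ] ℝ} {u' : Efull n →L[ℝ] ℝ}
    (hφ : HasFDerivAt φ φ' x.1) (hψ : HasFDerivAt ψ ψ' x.1)
    (hu : HasFDerivAt (ubar n ε h1 h2) u' x) :
    HasFDerivAt (util n ε h1 h2 φ ψ)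
      ((ubar n ε h1 h2 x • φ' + (1 - ubar n ε h1 h2 x) • ψ') ∘L
        ContinuousLinearMap.fst ℝ (Ep n) ℝ + (φ x.1 - ψ x.1) • u') x := by
  have hsum := ((hφ.comp x hasFDerivAt_fst).mul hu).add
    ((hψ.comp x hasFDerivAt_fst).mul (hu.const_sub 1))
  refine hsum.congr_fderiv (ContinuousLinearMap.ext fun v => ?_)
  simp only [Function.comp_apply, smul_neg, add_apply, smul_apply, smul_eq_mul,
    ContinuousLinearMap.comp_apply, ContinuousLinearMap.coe_fst', neg_apply]
  ring

theorem fderiv_util_apply (hh1 : DifferentiableAt ℝ h1 x.1) (hh2 : DifferentiableAt ℝ h2 x.1)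
    (hφ : DifferentiableAt ℝ φ x.1) (hψ : DifferentiableAt ℝ ψ x.1)
    (hgap : ε + h1 x.1 - h2 x.1 ≠ 0) (v : Efull n) :
    fderiv ℝ (util n ε h1 h2 φ ψ) x v =
      (ubar n ε h1 h2 x • fderiv ℝ φ x.1 + (1 - ubar n ε h1 h2 x) • fderiv ℝ ψ x.1) v.1 +
      (φ x.1 - ψ x.1) * ((v.2 - (ubar n ε h1 h2 x • fderiv ℝ h1 x.1 +
        (1 - ubar n ε h1 h2 x) • fderiv ℝ h2 x.1) v.1) / (ε + h1 x.1 - h2 x.1)) := by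
  rw [(hasFDerivAt_util hφ.hasFDerivAt hψ.hasFDerivAt
    (hasFDerivAt_ubar hh1.hasFDerivAt hh2.hasFDerivAt hgap)).fderiv]
  simp [div_eq_inv_mul]

theorem fderiv_util_vert (hh1 : DifferentiableAt ℝ h1 x.1) (hh2 : DifferentiableAt ℝ h2 x.1)
    (hφ : DifferentiableAt ℝ φ x.1) (hψ : DifferentiableAt ℝ ψ x.1)
    (hgap : ε + h1 x.1 - h2 x.1 ≠ 0) :
    fderiv ℝ (util n ε h1 h2 φ ψ) x (vert n) = (φ x.1 - ψ x.1) / (ε + h1 x.1 - h2 x.1) := by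
  simp [fderiv_util_apply hh1 hh2 hφ hψ hgap, vert, div_eq_mul_inv]

theorem abs_fderiv_util_horizontal_le {G H : ℝ} (hh1 : DifferentiableAt ℝ h1 x.1)
    (hh2 : DifferentiableAt ℝ h2 x.1) (hφ : DifferentiableAt ℝ φ x.1)
    (hψ : DifferentiableAt ℝ ψ x.1) (hx : x ∈ Omega n ε h1 h2 r)
    (hH1 : ‖fderiv ℝ h1 x.1‖ ≤ H) (hH2 : ‖fderiv ℝ h2 x.1‖ ≤ H)
    (hGφ : ‖fderiv ℝ φ x.1‖ ≤ G) (hGψ : ‖fderiv ℝ ψ x.1‖ ≤ G) (v : Ep n) :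
    |fderiv ℝ (util n ε h1 h2 φ ψ) x (v, 0)| ≤
      (H / (ε + h1 x.1 - h2 x.1) * |φ x.1 - ψ x.1| + G) * ‖v‖ := by
  have hgap := gap_pos_of_mem_Omega hx
  have hs := ubar_mem_Icc hx
  rw [fderiv_util_apply hh1 hh2 hφ hψ hgap.ne']
  set A := ubar n ε h1 h2 x • fderiv ℝ φ x.1 + (1 - ubar n ε h1 h2 x) • fderiv ℝ ψ x.1
  set B := ubar n ε h1 h2 x • fderiv ℝ h1 x.1 + (1 - ubar n ε h1 h2 x) • fderiv ℝ h2 x.1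
  have hA : |A v| ≤ G * ‖v‖ := A.le_of_opNorm_le (norm_convexCombo_le hs hGφ hGψ) v
  have hB : |B v| ≤ H * ‖v‖ := B.le_of_opNorm_le (norm_convexCombo_le hs hH1 hH2) v
  calc |A v + (φ x.1 - ψ x.1) * ((0 - B v) / (ε + h1 x.1 - h2 x.1))|
      ≤ |A v| + |φ x.1 - ψ x.1| * (|B v| / (ε + h1 x.1 - h2 x.1)) := by
        grw [abs_add_le]
        rw [abs_mul, abs_div, zero_sub, abs_neg, abs_of_pos hgap]
    _ ≤ G * ‖v‖ + |φ x.1 - ψ x.1| * (H * ‖v‖ / (ε + h1 x.1 - h2 x.1)) := by gcongr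
    _ = _ := by ring

end Interpolation

section NarrowRegion

variable {n : ℕ} {ε C₀ : ℝ} {h1 h2 φ ψ : Ep n → ℝ} {x : Efull n}

theorem DeltaComp.add_sq_norm_le_mul_gap (hδ : DeltaComp n ε C₀ h1 h2) (hC₀ : 0 < C₀) {y : Ep n}
    (hy : ‖y‖ ≤ 1) : ε + ‖y‖ ^ 2 ≤ C₀ * (ε + h1 y - h2 y) :=
  (div_le_iff₀' hC₀).1 (hδ y hy).1

theorem DeltaComp.add_sq_norm_pos (hδ : DeltaComp n ε C₀ h1 h2) (hC₀ : 0 < C₀)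
    (hx : x ∈ Omega n ε h1 h2 1) : 0 < ε + ‖x.1‖ ^ 2 :=
  pos_of_mul_pos_right ((gap_pos_of_mem_Omega hx).trans_le (hδ x.1 hx.1.le).2) hC₀.le

theorem abs_fderiv_util_tang_le {K : ℝ} (hC₀ : 0 < C₀) (hδ : DeltaComp n ε C₀ h1 h2)
    (hh1 : ContDiffOn ℝ 2 h1 (closedBall 0 1)) (hh2 : ContDiffOn ℝ 2 h2 (closedBall 0 1))
    (hh1_zero : fderiv ℝ h1 0 = 0) (hh2_zero : fderiv ℝ h2 0 = 0)
    (hh1_le : C2norm n h1 ≤ K) (hh2_le : C2norm n h2 ≤ K)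
    (hφ : ContDiffOn ℝ 1 φ (closedBall 0 1)) (hψ : ContDiffOn ℝ 1 ψ (closedBall 0 1))
    (hx : x ∈ Omega n ε h1 h2 1) (α : Fin (n - 1)) :
    |fderiv ℝ (util n ε h1 h2 φ ψ) x (tang n α)| ≤
      C₀ * K * ‖x.1‖ / (ε + ‖x.1‖ ^ 2) * |φ x.1 - ψ x.1| + (gradSup n φ + gradSup n ψ) := by
  have hK : 0 ≤ K := (C2norm_nonneg h1).trans hh1_le
  have hgradh1 : ‖fderiv ℝ h1 x.1‖ ≤ K * ‖x.1‖ := by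
    grw [norm_fderiv_le_C2norm_mul_norm hh1 hh1_zero hx.1, hh1_le]
  have hgradh2 : ‖fderiv ℝ h2 x.1‖ ≤ K * ‖x.1‖ := by
    grw [norm_fderiv_le_C2norm_mul_norm hh2 hh2_zero hx.1, hh2_le]
  have hgradφ : ‖fderiv ℝ φ x.1‖ ≤ gradSup n φ + gradSup n ψ :=
    le_add_of_le_of_nonneg (norm_fderiv_le_gradSup hφ hx.1.le) (gradSup_nonneg ψ)
  have hgradψ : ‖fderiv ℝ ψ x.1‖ ≤ gradSup n φ + gradSup n ψ :=
    le_add_of_nonneg_of_le (gradSup_nonneg φ) (norm_fderiv_le_gradSup hψ hx.1.le)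
  calc |fderiv ℝ (util n ε h1 h2 φ ψ) x (tang n α)|
      ≤ K * ‖x.1‖ / (ε + h1 x.1 - h2 x.1) * |φ x.1 - ψ x.1| +
          (gradSup n φ + gradSup n ψ) := by
        simpa [tang] using abs_fderiv_util_horizontal_le
          (differentiableAt_of_contDiffOn_closedBall (hh1.of_le one_le_two) hx.1)
          (differentiableAt_of_contDiffOn_closedBall (hh2.of_le one_le_two) hx.1)
          (differentiableAt_of_contDiffOn_closedBall hφ hx.1)
          (differentiableAt_of_contDiffOn_closedBall hψ hx.1) hx
          hgradh1 hgradh2 hgradφ hgradψ (EuclideanSpace.single α 1)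
    _ ≤ C₀ * (K * ‖x.1‖) / (ε + ‖x.1‖ ^ 2) * |φ x.1 - ψ x.1| +
          (gradSup n φ + gradSup n ψ) := by
        gcongr ?_ * _ + _
        exact div_le_mul_div_of_le_mul (by positivity) (gap_pos_of_mem_Omega hx)
          (hδ.add_sq_norm_pos hC₀ hx) (hδ.add_sq_norm_le_mul_gap hC₀ hx.1.le)
    _ = _ := by rw [mul_assoc C₀]

theorem abs_div_gap_bounds {C : ℝ} (hC₀ : 0 < C₀) (hC : C₀ ≤ C) (hδ : DeltaComp n ε C₀ h1 h2)
    (hx : x ∈ Omega n ε h1 h2 1) (a : ℝ) :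
    |a| / (C * (ε + ‖x.1‖ ^ 2)) ≤ |a / (ε + h1 x.1 - h2 x.1)| ∧
      |a / (ε + h1 x.1 - h2 x.1)| ≤ C * |a| / (ε + ‖x.1‖ ^ 2) := by
  have hgap := gap_pos_of_mem_Omega hx
  have hpos := hδ.add_sq_norm_pos hC₀ hx
  rw [abs_div, abs_of_pos hgap]
  constructor
  · exact div_le_div_of_nonneg_left (abs_nonneg a) hgap ((hδ x.1 hx.1.le).2.trans (by gcongr))
  · exact div_le_mul_div_of_le_mul (abs_nonneg a) hgap hpos
      ((hδ.add_sq_norm_le_mul_gap hC₀ hx.1.le).trans (by gcongr))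

end NarrowRegion

theorem stmt8_general (n : ℕ) (κ1 C₀ : ℝ) (hC₀ : 1 ≤ C₀) :
    ∃ C : ℝ, 0 < C ∧
      ∀ (ε : ℝ) (h1 h2 : Ep n → ℝ),
        ContDiffOn ℝ 2 h1 (closedBall 0 1) → ContDiffOn ℝ 2 h2 (closedBall 0 1) →
        fderiv ℝ h1 0 = 0 → fderiv ℝ h2 0 = 0 → C2norm n h1 + C2norm n h2 ≤ κ1 →
        DeltaComp n ε C₀ h1 h2 →
        ∀ φ ψ : Ep n → ℝ,
          ContDiffOn ℝ 1 φ (closedBall 0 1) → ContDiffOn ℝ 1 ψ (closedBall 0 1) →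
        ∀ x ∈ Omega n ε h1 h2 1,
          (∀ α : Fin (n - 1),
            |fderiv ℝ (util n ε h1 h2 φ ψ) x (tang n α)| ≤
              C * ‖x.1‖ / (ε + ‖x.1‖^2) * |φ x.1 - ψ x.1| +
              C * (gradSup n φ + gradSup n ψ)) ∧
          fderiv ℝ (util n ε h1 h2 φ ψ) x (vert n) =
            (φ x.1 - ψ x.1) / (ε + h1 x.1 - h2 x.1) ∧
          |φ x.1 - ψ x.1| / (C * (ε + ‖x.1‖^2)) ≤
            |fderiv ℝ (util n ε h1 h2 φ ψ) x (vert n)| ∧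
          |fderiv ℝ (util n ε h1 h2 φ ψ) x (vert n)| ≤
            C * |φ x.1 - ψ x.1| / (ε + ‖x.1‖^2) := by
  have hC₀_pos : 0 < C₀ := one_pos.trans_le hC₀
  refine ⟨C₀ * max 1 κ1, by positivity, ?_⟩
  intro ε h1 h2 hh1 hh2 hh1_zero hh2_zero hκ hδ φ ψ hφ hψ x hx
  have hvert := fderiv_util_vert
    (differentiableAt_of_contDiffOn_closedBall (hh1.of_le one_le_two) hx.1)
    (differentiableAt_of_contDiffOn_closedBall (hh2.of_le one_le_two) hx.1)
    (differentiableAt_of_contDiffOn_closedBall hφ hx.1)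
    (differentiableAt_of_contDiffOn_closedBall hψ hx.1) (gap_pos_of_mem_Omega hx).ne'
  have hC₀_le : C₀ ≤ C₀ * max 1 κ1 := le_mul_of_one_le_right hC₀_pos.le (le_max_left 1 κ1)
  refine ⟨fun α => ?_, hvert, hvert ▸ abs_div_gap_bounds hC₀_pos hC₀_le hδ hx _⟩
  have hh1_le : C2norm n h1 ≤ max 1 κ1 :=
    le_max_of_le_right (by linarith [C2norm_nonneg h2])
  have hh2_le : C2norm n h2 ≤ max 1 κ1 :=
    le_max_of_le_right (by linarith [C2norm_nonneg h1])
  grw [abs_fderiv_util_tang_le hC₀_pos hδ hh1 hh2 hh1_zero hh2_zero hh1_le hh2_le hφ hψ hx α]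
  gcongr
  exact le_mul_of_one_le_left (add_nonneg (gradSup_nonneg φ) (gradSup_nonneg ψ))
    (hC₀.trans hC₀_le)

theorem stmt8 (n : ℕ) (hn : 2 ≤ n) (κ1 C₀ : ℝ) (hκ1 : 0 < κ1) (hC₀ : 1 ≤ C₀) :
    ∃ C : ℝ, 0 < C ∧
      ∀ κ0 : ℝ, 0 < κ0 → ∀ ε ∈ Set.Ioo (0:ℝ) 1, ∀ h1 h2 : Ep n → ℝ,
        HGeom n ε κ0 κ1 h1 h2 → DeltaComp n ε C₀ h1 h2 →
        ∀ φ ψ : Ep n → ℝ,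
          ContDiffOn ℝ 2 φ (closedBall 0 1) → ContDiffOn ℝ 2 ψ (closedBall 0 1) →
        ∀ x ∈ Omega n ε h1 h2 1,
          (∀ α : Fin (n - 1),
            |fderiv ℝ (util n ε h1 h2 φ ψ) x (tang n α)| ≤
              C * ‖x.1‖ / (ε + ‖x.1‖^2) * |φ x.1 - ψ x.1| +
              C * (gradSup n φ + gradSup n ψ)) ∧
          fderiv ℝ (util n ε h1 h2 φ ψ) x (vert n) =
            (φ x.1 - ψ x.1) / (ε + h1 x.1 - h2 x.1) ∧
          |φ x.1 - ψ x.1| / (C * (ε + ‖x.1‖^2)) ≤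
            |fderiv ℝ (util n ε h1 h2 φ ψ) x (vert n)| ∧
          |fderiv ℝ (util n ε h1 h2 φ ψ) x (vert n)| ≤
            C * |φ x.1 - ψ x.1| / (ε + ‖x.1‖^2) := by
  obtain ⟨C, hC, hbounds⟩ := stmt8_general n κ1 C₀ hC₀
  exact ⟨C, hC, fun _ _ ε _ h1 h2 ⟨hh1, hh2, _, _, _, hh1_zero, hh2_zero, _, hκ⟩ hδ φ ψ hφ hψ =>
    hbounds ε h1 h2 hh1 hh2 hh1_zero hh2_zero hκ hδ φ ψ (hφ.of_le one_le_two)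
      (hψ.of_le one_le_two)⟩
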